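/- Let dB ≤ dC be positive integers, δ ≥ 0 and ε ≥ 0 real numbers with ε + √2 · δ^{1/4} < 1, and N a positive integer. Suppose v_1, …, v_N : (Fin dB) × (Fin dC) → ℂ are unit vectors with E(v_i) ≥ logb 2 dB − δ for every i, and M_1, …, M_N are matrices on (Fin dB) × (Fin dC) such that each M_i is positive semidefinite, each M_i^Γ is positive semidefinite, 1 − ∑ i, M_i is positive semidefinite, and Re (Matrix.trace (φ_{v_i} * M_i)) ≥ 1 − ε for every i. Then (N : ℝ) ≤ (1 − ε − √2 · δ^{1/4})⁻¹ · dC. -/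

import Mathlib

/-!
A maximally entangled vector `w` is `dB^{-1/2}` times the vectorization of an isometry, and the
partial transpose of its projector has operator norm `1 / dB`. A measurement operator with positive
partial transpose therefore accepts `w` with probability at most `tr M / dB`
(`re_form_le_trace`), even if the isometry is weakened to a contraction.

A vector `v` of entanglement entropy at least `log dB - δ` is close to such a `w`, namely the one
given by the polar part of the coefficient matrix of `v` (`exists_polar`): the overlap is
`∑ √(p i / dB)`, where `p` is the spectrum of the reduced state, and the inequality `ln x ≤ x - 1`
bounds it below by `1 - δ ln 2 / 2` (`one_sub_le_sum_sqrt`), so that `‖v - w‖² ≤ δ ln 2`. Moving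
from `v` to `w` changes the acceptance probability by at most `2 √(δ ln 2)` (`re_form_sub_le`),
which is at most `√2 δ^{1/4}` as soon as the latter is at most one (`two_sqrt_le`).

Thus `1 - ε - √2 δ^{1/4} ≤ tr (M i) / dB` for each `i`, and since the `M i` sum to at most the
identity, summing over `i` gives `N (1 - ε - √2 δ^{1/4}) ≤ dC`.
-/

open scoped BigOperators Classical ComplexOrder Matrix

noncomputable section

/-- von Neumann entropy in bits of a (Hermitian) matrix, via its eigenvalues. -/
def vnEntropy {n : Type*} [Fintype n] [DecidableEq n] (ρ : Matrix n n ℂ) : ℝ :=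
  if h : ρ.IsHermitian then -∑ i, h.eigenvalues i * Real.logb 2 (h.eigenvalues i) else 0

/-- A density matrix: positive semidefinite with unit trace. -/
def IsDensityMatrix {n : Type*} [Fintype n] [DecidableEq n] (ρ : Matrix n n ℂ) : Prop :=
  ρ.PosSemidef ∧ ρ.trace = 1

/-- Partial trace over the second (C) factor. -/
def ptraceC {dB dC : ℕ} (M : Matrix (Fin dB × Fin dC) (Fin dB × Fin dC) ℂ) :
    Matrix (Fin dB) (Fin dB) ℂ := fun i k => ∑ j, M (i, j) (k, j)

/-- Partial trace over the first (B) factor. -/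
def ptraceB {dB dC : ℕ} (M : Matrix (Fin dB × Fin dC) (Fin dB × Fin dC) ℂ) :
    Matrix (Fin dC) (Fin dC) ℂ := fun j l => ∑ i, M (i, j) (i, l)

/-- Partial transpose (on the second factor). -/
def ptranspose {dB dC : ℕ} (M : Matrix (Fin dB × Fin dC) (Fin dB × Fin dC) ℂ) :
    Matrix (Fin dB × Fin dC) (Fin dB × Fin dC) ℂ := fun p q => M (p.1, q.2) (q.1, p.2)

/-- The pure state (rank-one projector) associated to a vector. -/
def pureState {ι : Type*} (v : ι → ℂ) : Matrix ι ι ℂ := Matrix.vecMulVec v (star v)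

/-- A unit vector. -/
def IsUnitVec {ι : Type*} [Fintype ι] (v : ι → ℂ) : Prop := ∑ x, Complex.normSq (v x) = 1

/-- Entanglement entropy of a bipartite pure state. -/
def entg {dB dC : ℕ} (v : Fin dB × Fin dC → ℂ) : ℝ := vnEntropy (ptraceC (pureState v))

/-- The n-fold tensor power of an isometry `U : A → B ⊗ C`. -/
def tensorPow {dA dB dC : ℕ} (U : Matrix (Fin dB × Fin dC) (Fin dA) ℂ) (n : ℕ) :
    Matrix (Fin n → Fin dB × Fin dC) (Fin n → Fin dA) ℂ :=
  fun f g => ∏ k, U (f k) (g k)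

/-- n-fold partial trace over the C factors. -/
def ptraceCn {dB dC n : ℕ}
    (M : Matrix (Fin n → Fin dB × Fin dC) (Fin n → Fin dB × Fin dC) ℂ) :
    Matrix (Fin n → Fin dB) (Fin n → Fin dB) ℂ :=
  fun fB gB => ∑ fC : Fin n → Fin dC, M (fun k => (fB k, fC k)) (fun k => (gB k, fC k))

/-- n-fold partial transpose over the C factors. -/
def ptransposeN {dB dC n : ℕ}
    (M : Matrix (Fin n → Fin dB × Fin dC) (Fin n → Fin dB × Fin dC) ℂ) :
    Matrix (Fin n → Fin dB × Fin dC) (Fin n → Fin dB × Fin dC) ℂ :=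
  fun f g => M (fun k => ((f k).1, (g k).2)) (fun k => ((g k).1, (f k).2))

/-- A POVM on the n-fold space implemented by one-way LOCC from C to B:
Charlie measures `(M x)` on `C^n`, sends `x`, and Bob measures `(B x i)` on `B^n`. -/
def IsOneWayLOCC {dB dC n N : ℕ}
    (Np : Fin N → Matrix (Fin n → Fin dB × Fin dC) (Fin n → Fin dB × Fin dC) ℂ) : Prop :=
  ∃ (m : ℕ) (M : Fin m → Matrix (Fin n → Fin dC) (Fin n → Fin dC) ℂ)
    (B : Fin m → Fin N → Matrix (Fin n → Fin dB) (Fin n → Fin dB) ℂ),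
    (∀ x, (M x).PosSemidef) ∧ (∑ x, M x) = 1 ∧
    (∀ x i, (B x i).PosSemidef) ∧ (∀ x, (∑ i, B x i) = 1) ∧
    (∀ i f g, Np i f g =
      ∑ x, B x i (fun k => (f k).1) (fun k => (g k).1) * M x (fun k => (f k).2) (fun k => (g k).2))

/-- The rate R is achievable with one-way LOCC (C→B) decoding for the isometry U. -/
def AchievableOneWayCB {dA dB dC : ℕ} (U : Matrix (Fin dB × Fin dC) (Fin dA) ℂ) (R : ℝ) : Prop :=
  ∀ ε : ℝ, 0 < ε → ∃ n₀ : ℕ, ∀ n : ℕ, n₀ ≤ n →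
    ∃ (N : ℕ) (φ : Fin N → (Fin n → Fin dB × Fin dC) → ℂ)
      (Np : Fin N → Matrix (Fin n → Fin dB × Fin dC) (Fin n → Fin dB × Fin dC) ℂ),
      (2 : ℝ) ^ ((n : ℝ) * (R - ε)) ≤ (N : ℝ) ∧
      (∀ i, IsUnitVec (φ i)) ∧
      (∀ i, ∃ ψ, (tensorPow U n).mulVec ψ = φ i) ∧
      IsOneWayLOCC Np ∧
      (∀ i, 1 - ε ≤ (Matrix.trace (pureState (φ i) * Np i)).re)

/-- Base-2 Shannon entropy. -/
def shannonEntropy {ι : Type*} [Fintype ι] (q : ι → ℝ) : ℝ := -∑ x, q x * Real.logb 2 (q x)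

/-! ### Continuity of the success probability in the state -/

theorem trace_pureState_mul {ι : Type*} [Fintype ι] (v : ι → ℂ) (M : Matrix ι ι ℂ) :
    Matrix.trace (pureState v * M) = star v ⬝ᵥ M *ᵥ v := by
  rw [pureState, Matrix.vecMulVec_mul, Matrix.trace_vecMulVec, dotProduct_comm,
    Matrix.dotProduct_mulVec]

theorem dotProduct_mulVec_comm_re {ι : Type*} [Fintype ι] {M : Matrix ι ι ℂ}
    (hM : M.IsHermitian) (x y : ι → ℂ) :
    (star x ⬝ᵥ M *ᵥ y).re = (star y ⬝ᵥ M *ᵥ x).re := by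
  rw [← Complex.conj_re (star y ⬝ᵥ M *ᵥ x)]
  congr 1
  rw [starRingEnd_apply, ← Matrix.star_dotProduct_star, star_star, Matrix.star_mulVec, hM.eq,
    ← Matrix.dotProduct_mulVec]

/-- For `0 ≤ M ≤ 1`, replacing a unit vector `v` by any `w` at distance at most `s` lowers
`⟨v, M v⟩` by at most `2 s`; `w` need not be normalized. -/
theorem re_form_sub_le {ι : Type*} [Fintype ι] [DecidableEq ι] {M : Matrix ι ι ℂ}
    (hM : M.PosSemidef) (hM1 : (1 - M).PosSemidef) (v w : ι → ℂ) (s : ℝ) (hs : 0 ≤ s)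
    (hv : (star v ⬝ᵥ v).re = 1) (hz : (star (v - w) ⬝ᵥ (v - w)).re ≤ s ^ 2) :
    (star v ⬝ᵥ M *ᵥ v).re ≤ (star w ⬝ᵥ M *ᵥ w).re + 2 * s := by
  have hle : ∀ x : ι → ℂ, (star x ⬝ᵥ M *ᵥ x).re ≤ (star x ⬝ᵥ x).re := fun x => by
    have := hM1.re_dotProduct_nonneg x
    simp only [Matrix.sub_mulVec, Matrix.one_mulVec, dotProduct_sub, map_sub] at this
    simpa using this
  have hnn : ∀ x : ι → ℂ, 0 ≤ (star x ⬝ᵥ M *ᵥ x).re := fun x => hM.re_dotProduct_nonneg x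
  obtain ⟨z, rfl⟩ : ∃ z, w = v - z := ⟨v - w, by simp⟩
  rw [sub_sub_cancel] at hz
  have hexp : ∀ t : ℝ, (star ((t : ℂ) • v - z) ⬝ᵥ M *ᵥ ((t : ℂ) • v - z)).re =
      (star v ⬝ᵥ M *ᵥ v).re * (t * t) + (-2 * (star v ⬝ᵥ M *ᵥ z).re) * t
        + (star z ⬝ᵥ M *ᵥ z).re := fun t => by
    have h := dotProduct_mulVec_comm_re hM.isHermitian z v
    simp only [star_sub, star_smul, Matrix.mulVec_sub, Matrix.mulVec_smul, sub_dotProduct,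
      dotProduct_sub, smul_dotProduct, dotProduct_smul, smul_eq_mul, Complex.star_def,
      Complex.conj_ofReal, Complex.sub_re, Complex.re_ofReal_mul]
    rw [h]; ring
  -- Cauchy–Schwarz for the form of `M`, from the nonnegativity of this quadratic in `t`.
  have hd := discrim_le_zero (fun t => (hexp t) ▸ hnn ((t : ℂ) • v - z))
  rw [discrim] at hd
  have hsq : (star v ⬝ᵥ M *ᵥ z).re ^ 2 ≤ s ^ 2 := by
    have h1 := hle v
    have h2 := (hle z).trans hz
    nlinarith [hnn v, hnn z, mul_le_mul (h1.trans hv.le) h2 (hnn z) zero_le_one]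
  have hb := (abs_le_of_sq_le_sq' hsq hs).2
  have h1 := hexp 1
  simp only [Complex.ofReal_one, one_smul] at h1
  have := hnn z
  linarith

/-! ### PPT operators on maximally entangled vectors -/

/-- The rank-one case of `re_form_le_trace`: with `Y = Wᴴ X`, the left side is the real part of
`∑ Y j l * conj (Y l j)`, at most the squared Frobenius norm of `Y`, which is at most that of `X`
because `W` is a contraction. -/
theorem re_rankOne_le {m n : ℕ} {W : Matrix (Fin m) (Fin n) ℂ}
    (hW : (1 - W * Wᴴ).PosSemidef) (x : Fin m × Fin n → ℂ) :
    (∑ i, ∑ j, ∑ k, ∑ l, star (W i j) * W k l * (x (i, l) * star (x (k, j)))).re ≤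
      (x ⬝ᵥ star x).re := by
  set X : Matrix (Fin m) (Fin n) ℂ := Matrix.of fun i j => x (i, j) with hX
  set Y : Matrix (Fin n) (Fin n) ℂ := Wᴴ * X with hY
  have hsum : ∑ i, ∑ j, ∑ k, ∑ l, star (W i j) * W k l * (x (i, l) * star (x (k, j))) =
      ∑ j, ∑ l, Y j l * star (Y l j) := by
    simp only [hY, hX, Matrix.mul_apply, Matrix.conjTranspose_apply, Matrix.of_apply, star_sum,
      star_mul, star_star, Finset.sum_mul_sum]
    rw [Finset.sum_comm]
    refine Finset.sum_congr rfl fun j _ => ?_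
    rw [Finset.sum_comm' (s' := fun _ => Finset.univ) (t' := Finset.univ) (by simp)]
    rw [Finset.sum_comm]
    conv_rhs => rw [Finset.sum_comm]
    refine Finset.sum_congr rfl fun i _ => ?_
    conv_rhs => rw [Finset.sum_comm]
    refine Finset.sum_congr rfl fun k _ => Finset.sum_congr rfl fun l _ => ?_
    ring
  have htrY : (Yᴴ * Y).trace.re = ∑ j, ∑ l, Complex.normSq (Y j l) := by
    simp only [Matrix.trace, Matrix.diag, Matrix.mul_apply, Matrix.conjTranspose_apply,
      Complex.star_def, Complex.re_sum, ← Complex.normSq_eq_conj_mul_self, Complex.ofReal_re]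
    exact Finset.sum_comm
  have htrX : (Xᴴ * X).trace.re = (x ⬝ᵥ star x).re := by
    congr 1
    simp only [Matrix.trace, Matrix.diag, Matrix.mul_apply, Matrix.conjTranspose_apply, dotProduct,
      Fintype.sum_prod_type, hX, Matrix.of_apply, Pi.star_apply]
    rw [Finset.sum_comm]
    exact Finset.sum_congr rfl fun i _ => Finset.sum_congr rfl fun k _ => mul_comm _ _
  have hYX : (Yᴴ * Y).trace.re ≤ (Xᴴ * X).trace.re := by
    have h := (hW.conjTranspose_mul_mul_same X).trace_nonneg
    rw [Matrix.mul_sub, Matrix.sub_mul, Matrix.trace_sub, Matrix.mul_one] at h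
    have h' := (Complex.le_def.mp h).1
    have he : Yᴴ * Y = Xᴴ * (W * Wᴴ) * X := by
      simp [hY, Matrix.conjTranspose_mul, Matrix.mul_assoc]
    rw [he]
    simpa using h'
  rw [← htrX, hsum]
  refine le_trans ?_ hYX
  have hpt : ∀ a b : ℂ, (a * star b).re ≤ (Complex.normSq a + Complex.normSq b) / 2 :=
    fun a b => by
      simp only [Complex.normSq_apply, Complex.star_def, Complex.mul_re, Complex.conj_re,
        Complex.conj_im]
      nlinarith [sq_nonneg (a.re - b.re), sq_nonneg (a.im - b.im)]
  calc (∑ j, ∑ l, Y j l * star (Y l j)).re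
      ≤ ∑ j, ∑ l, (Complex.normSq (Y j l) + Complex.normSq (Y l j)) / 2 := by
        simp only [Complex.re_sum]
        exact Finset.sum_le_sum fun j _ => Finset.sum_le_sum fun l _ => hpt _ _
    _ = (Yᴴ * Y).trace.re := by
        have hc : ∑ j, ∑ l, Complex.normSq (Y l j) = ∑ j, ∑ l, Complex.normSq (Y j l) :=
          Finset.sum_comm
        simp only [← Finset.sum_div, Finset.sum_add_distrib]
        rw [hc, htrY]; ring

/-- If the partial transpose of `M` is positive semidefinite, then `⟨w, M w⟩ ≤ tr M` for the
vectorization `w` of any contraction `W`. For `W` an isometry, `w / √m` is maximally entangled, and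
this says that such a state passes the test `M` with probability at most `tr M / m`. -/
theorem re_form_le_trace {m n : ℕ} {M : Matrix (Fin m × Fin n) (Fin m × Fin n) ℂ}
    (hM : (ptranspose M).PosSemidef) {W : Matrix (Fin m) (Fin n) ℂ}
    (hW : (1 - W * Wᴴ).PosSemidef) :
    (star (fun p : Fin m × Fin n => W p.1 p.2) ⬝ᵥ M *ᵥ (fun p => W p.1 p.2)).re ≤ M.trace.re := by
  have htr : M.trace = (ptranspose M).trace := rfl
  have hform : star (fun p : Fin m × Fin n => W p.1 p.2) ⬝ᵥ M *ᵥ (fun p => W p.1 p.2) =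
      ∑ i, ∑ j, ∑ k, ∑ l, star (W i j) * W k l * ptranspose M (i, l) (k, j) := by
    simp only [dotProduct, Matrix.mulVec, Fintype.sum_prod_type, Finset.mul_sum, Pi.star_apply,
      ptranspose]
    refine Finset.sum_congr rfl fun i _ => Finset.sum_congr rfl fun j _ =>
      Finset.sum_congr rfl fun k _ => Finset.sum_congr rfl fun l _ => by ring
  rw [hform, htr]
  obtain ⟨r, x, hx⟩ := Matrix.posSemidef_iff_eq_sum_vecMulVec.mp hM
  have hswap : ∑ i, ∑ j, ∑ k, ∑ l, star (W i j) * W k l * ptranspose M (i, l) (k, j) =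
      ∑ a, ∑ i, ∑ j, ∑ k, ∑ l, star (W i j) * W k l * (x a (i, l) * star (x a (k, j))) := by
    rw [hx]
    simp only [Matrix.sum_apply, Matrix.vecMulVec_apply, Pi.star_apply, Finset.mul_sum]
    simp only [Finset.sum_comm (s := Finset.univ (α := Fin n)) (t := Finset.univ (α := Fin r)),
      Finset.sum_comm (s := Finset.univ (α := Fin m)) (t := Finset.univ (α := Fin r))]
  rw [hswap, hx, Matrix.trace_sum, Complex.re_sum, Complex.re_sum]
  refine Finset.sum_le_sum fun a _ => ?_
  rw [Matrix.trace_vecMulVec]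
  exact re_rankOne_le hW (x a)

/-! ### Highly entangled vectors are near maximally entangled ones -/

/-- The partial isometry of the polar decomposition of `V`: a contraction `W` whose
Hilbert–Schmidt inner product with `V` is the sum of the singular values of `V`. -/
theorem exists_polar {m n : ℕ} (V : Matrix (Fin m) (Fin n) ℂ) (h : (V * Vᴴ).IsHermitian) :
    ∃ W : Matrix (Fin m) (Fin n) ℂ, (1 - W * Wᴴ).PosSemidef ∧
      (V * Wᴴ).trace = ((∑ i, √(h.eigenvalues i) : ℝ) : ℂ) := by
  have hnn : ∀ i, 0 ≤ h.eigenvalues i :=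
    (Matrix.posSemidef_self_mul_conjTranspose V).eigenvalues_nonneg
  set U : Matrix (Fin m) (Fin m) ℂ :=
    (h.eigenvectorUnitary : Matrix (Fin m) (Fin m) ℂ) with hU
  have hUU : U * Uᴴ = 1 := Unitary.coe_mul_star_self h.eigenvectorUnitary
  have hUU' : Uᴴ * U = 1 := Unitary.coe_star_mul_self h.eigenvectorUnitary
  set L : Matrix (Fin m) (Fin m) ℂ := Matrix.diagonal fun i => (h.eigenvalues i : ℂ) with hL
  set D : Matrix (Fin m) (Fin m) ℂ :=
    Matrix.diagonal fun i => (((√(h.eigenvalues i))⁻¹ : ℝ) : ℂ) with hD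
  have hDs : Dᴴ = D := by
    rw [hD, Matrix.diagonal_conjTranspose]
    congr 1; ext i; simp
  have hspec : V * Vᴴ = U * L * Uᴴ := by
    have := h.spectral_theorem
    rw [Unitary.conjStarAlgAut_apply] at this
    exact this
  -- `W = (V Vᴴ)^{-1/2} V`; since `0⁻¹ = 0`, the inverse is taken on the support of `V Vᴴ` only.
  refine ⟨U * D * Uᴴ * V, ?_, ?_⟩
  · have h1 : (1 : Matrix (Fin m) (Fin m) ℂ) - U * D * Uᴴ * V * (U * D * Uᴴ * V)ᴴ =
        U * (1 - D * L * D) * Uᴴ := by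
      have : U * D * Uᴴ * V * (U * D * Uᴴ * V)ᴴ
          = U * D * Uᴴ * (V * Vᴴ) * U * D * Uᴴ := by
        simp only [Matrix.conjTranspose_mul, Matrix.conjTranspose_conjTranspose, hDs,
          Matrix.mul_assoc]
      rw [this, hspec, Matrix.mul_sub, Matrix.sub_mul, Matrix.mul_one, hUU]
      congr 1
      calc U * D * Uᴴ * (U * L * Uᴴ) * U * D * Uᴴ
          = U * D * (Uᴴ * U) * L * (Uᴴ * U) * D * Uᴴ := by simp only [Matrix.mul_assoc]
        _ = _ := by rw [hUU']; simp only [Matrix.mul_one, Matrix.mul_assoc]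
    rw [h1]
    refine Matrix.PosSemidef.mul_mul_conjTranspose_same ?_ U
    rw [hD, hL, Matrix.diagonal_mul_diagonal, Matrix.diagonal_mul_diagonal, ← Matrix.diagonal_one,
      Matrix.diagonal_sub]
    refine Matrix.PosSemidef.diagonal fun i => ?_
    have hr : (√(h.eigenvalues i))⁻¹ * h.eigenvalues i * (√(h.eigenvalues i))⁻¹ ≤ 1 := by
      nth_rw 2 [← Real.mul_self_sqrt (hnn i)]
      rcases eq_or_ne (√(h.eigenvalues i)) 0 with h0 | h0
      · simp [h0]
      · apply le_of_eq; field_simp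
    have : (0 : ℝ) ≤ 1 - (√(h.eigenvalues i))⁻¹ * h.eigenvalues i * (√(h.eigenvalues i))⁻¹ := by
      linarith
    simpa using (Complex.zero_le_real.mpr this)
  · have h1 : V * (U * D * Uᴴ * V)ᴴ = U * (L * D) * Uᴴ := by
      have : V * (U * D * Uᴴ * V)ᴴ = V * Vᴴ * U * D * Uᴴ := by
        simp only [Matrix.conjTranspose_mul, Matrix.conjTranspose_conjTranspose, hDs,
          Matrix.mul_assoc]
      rw [this, hspec]
      calc U * L * Uᴴ * U * D * Uᴴ = U * L * (Uᴴ * U) * D * Uᴴ := by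
            simp only [Matrix.mul_assoc]
        _ = _ := by rw [hUU']; simp only [Matrix.mul_one, Matrix.mul_assoc]
    rw [h1, Matrix.trace_mul_cycle, hUU', Matrix.one_mul, hL, hD, Matrix.diagonal_mul_diagonal,
      Matrix.trace_diagonal, Complex.ofReal_sum]
    refine Finset.sum_congr rfl fun i _ => ?_
    rw [← Complex.ofReal_mul]
    congr 1
    rw [← div_eq_mul_inv, Real.div_sqrt]

/-- A distribution `p` whose entropy is within `δ` bits of `log d` has overlap at least
`1 - δ ln 2 / 2` with the constant weight `1 / d`. This is `ln x ≤ x - 1` at `x = (d p i)^{-1/2}`,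
averaged over `p`. -/
theorem one_sub_le_sum_sqrt {ι : Type*} [Fintype ι] (p : ι → ℝ) (hp : ∀ i, 0 ≤ p i)
    (hp1 : ∑ i, p i = 1) (d δ : ℝ) (hd : 0 < d)
    (hE : Real.logb 2 d - δ ≤ -∑ i, p i * Real.logb 2 (p i)) :
    1 - δ * Real.log 2 / 2 ≤ ∑ i, √(p i) * (√d)⁻¹ := by
  have hl2 : 0 < Real.log 2 := Real.log_pos one_lt_two
  have hsd : 0 < √d := Real.sqrt_pos.mpr hd
  have hpt : ∀ i, p i - p i * Real.log (p i) / 2 - p i * (Real.log d / 2) ≤ √(p i) * (√d)⁻¹ := by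
    intro i
    rcases (hp i).eq_or_lt with h0 | h0
    · simp [← h0]
    · have hs : 0 < √(p i) := Real.sqrt_pos.mpr h0
      have h := Real.log_le_sub_one_of_pos (inv_pos.mpr (mul_pos hs hsd))
      rw [Real.log_inv, Real.log_mul hs.ne' hsd.ne', Real.log_sqrt h0.le, Real.log_sqrt hd.le] at h
      have h2 := mul_le_mul_of_nonneg_left h h0.le
      have h3 : p i * ((√(p i) * √d)⁻¹ - 1) = √(p i) * (√d)⁻¹ - p i := by
        nth_rw 1 [← Real.mul_self_sqrt h0.le]
        have : √(p i) * √(p i) = p i := Real.mul_self_sqrt h0.le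
        field_simp
        nlinarith
      rw [h3] at h2
      linarith
  have hs := Finset.sum_le_sum fun i (_ : i ∈ Finset.univ) => hpt i
  rw [Finset.sum_sub_distrib, Finset.sum_sub_distrib, ← Finset.sum_mul, ← Finset.sum_div, hp1] at hs
  have hE' : Real.log d - δ * Real.log 2 ≤ -∑ i, p i * Real.log (p i) := by
    have h1 : ∑ i, p i * Real.logb 2 (p i) = (∑ i, p i * Real.log (p i)) / Real.log 2 := by
      rw [Finset.sum_div]
      exact Finset.sum_congr rfl fun i _ => by rw [Real.logb, mul_div_assoc]
    have h2 := mul_le_mul_of_nonneg_right hE hl2.le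
    rw [h1, Real.logb] at h2
    have e1 : (Real.log d / Real.log 2 - δ) * Real.log 2 = Real.log d - δ * Real.log 2 := by
      field_simp
    have e2 : -((∑ i, p i * Real.log (p i)) / Real.log 2) * Real.log 2
        = -∑ i, p i * Real.log (p i) := by
      field_simp
    linarith
  linarith

/-! ### The bound for a single message -/

/-- The hypothesis puts `δ` in the range where `√δ` is dominated by `δ ^ (1/4)`. -/
theorem two_sqrt_le {δ : ℝ} (hδ : 0 ≤ δ) (hδ1 : √2 * δ ^ ((1 : ℝ) / 4) ≤ 1) :
    2 * √(δ * Real.log 2) ≤ √2 * δ ^ ((1 : ℝ) / 4) := by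
  set y := δ ^ ((1 : ℝ) / 4) with hy
  have hy0 : 0 ≤ y := Real.rpow_nonneg hδ _
  have hy4 : y ^ 4 = δ := by
    rw [hy, ← Real.rpow_natCast, ← Real.rpow_mul hδ]; norm_num
  have h2 : √2 * √2 = 2 := Real.mul_self_sqrt zero_le_two
  have hy2 : 2 * y ^ 2 ≤ 1 := by
    have h0 : 0 ≤ √2 * y := by positivity
    nlinarith
  have hl : Real.log 2 ≤ 1 := by linarith [Real.log_two_lt_d9]
  have hl0 : 0 ≤ Real.log 2 := Real.log_nonneg one_le_two
  have hs := Real.sq_sqrt (mul_nonneg hδ hl0)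
  apply le_of_sq_le_sq _ (by positivity)
  rw [mul_pow, mul_pow, hs, ← hy4, Real.sq_sqrt zero_le_two]
  nlinarith [mul_le_mul_of_nonneg_left hl (pow_nonneg hy0 4),
    mul_le_mul_of_nonneg_left hy2 (pow_nonneg hy0 2)]

/-- A PPT test `0 ≤ M ≤ 1` accepts a vector of entanglement entropy at least `log dB - δ` with
probability at most `tr M / dB + 2 √(δ ln 2)`. -/
theorem success_le {dB dC : ℕ} (hB : 0 < dB) {δ : ℝ}
    (v : Fin dB × Fin dC → ℂ) (hv : IsUnitVec v) (hE : entg v ≥ Real.logb 2 dB - δ)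
    {M : Matrix (Fin dB × Fin dC) (Fin dB × Fin dC) ℂ} (hM : M.PosSemidef)
    (hMΓ : (ptranspose M).PosSemidef) (hM1 : (1 - M).PosSemidef) :
    (Matrix.trace (pureState v * M)).re ≤ M.trace.re / dB + 2 * √(δ * Real.log 2) := by
  have hd : (0 : ℝ) < dB := Nat.cast_pos.mpr hB
  set V : Matrix (Fin dB) (Fin dC) ℂ := Matrix.of fun i j => v (i, j) with hV
  have hρ : ptraceC (pureState v) = V * Vᴴ := by
    ext i k
    simp [ptraceC, pureState, Matrix.mul_apply, Matrix.vecMulVec_apply, hV]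
  have hherm : (V * Vᴴ).IsHermitian := Matrix.isHermitian_mul_conjTranspose_self V
  have hE' : Real.logb 2 dB - δ ≤
      -∑ i, hherm.eigenvalues i * Real.logb 2 (hherm.eigenvalues i) := by
    have h := hE
    rw [entg, hρ, vnEntropy, dif_pos hherm] at h
    exact h
  have hvv : star v ⬝ᵥ v = 1 := by
    have h : ∑ x, (Complex.normSq (v x) : ℂ) = 1 := by
      rw [← Complex.ofReal_sum, hv, Complex.ofReal_one]
    simpa [dotProduct, Complex.normSq_eq_conj_mul_self] using h
  have htr : (V * Vᴴ).trace = 1 := by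
    rw [← hvv]
    simp only [Matrix.trace, Matrix.diag, Matrix.mul_apply, Matrix.conjTranspose_apply, dotProduct,
      Fintype.sum_prod_type, hV, Matrix.of_apply, Pi.star_apply, mul_comm]
  have hsum : ∑ i, hherm.eigenvalues i = 1 := by
    have h := hherm.trace_eq_sum_eigenvalues
    rw [htr] at h
    simpa using (congrArg Complex.re h).symm
  obtain ⟨W, hW, hVW⟩ := exists_polar V hherm
  have hF := one_sub_le_sum_sqrt _
    (Matrix.posSemidef_self_mul_conjTranspose V).eigenvalues_nonneg hsum dB δ hd hE'
  rw [← Finset.sum_mul] at hF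
  set c : ℝ := (√dB)⁻¹ with hc
  have hc2 : c * c = (dB : ℝ)⁻¹ := by rw [hc, ← mul_inv, Real.mul_self_sqrt hd.le]
  set u : Fin dB × Fin dC → ℂ := fun p => W p.1 p.2 with hu
  have hvu : (star v ⬝ᵥ u).re = ∑ i, √(hherm.eigenvalues i) := by
    have h : star v ⬝ᵥ u = star (V * Wᴴ).trace := by
      simp only [Matrix.trace, Matrix.diag, Matrix.mul_apply, Matrix.conjTranspose_apply,
        dotProduct, Fintype.sum_prod_type, hV, hu, Matrix.of_apply, Pi.star_apply, star_sum,
        star_mul', star_star]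
    rw [h, hVW, Complex.star_def, Complex.conj_ofReal, Complex.ofReal_re]
  have huv : (star u ⬝ᵥ v).re = (star v ⬝ᵥ u).re := by
    rw [← Complex.conj_re (star v ⬝ᵥ u), starRingEnd_apply, ← Matrix.star_dotProduct_star,
      star_star, dotProduct_comm, dotProduct_comm]
  have huu : (star u ⬝ᵥ u).re ≤ dB := by
    have h := (Complex.le_def.mp hW.trace_nonneg).1
    have h2 : star u ⬝ᵥ u = (W * Wᴴ).trace := by
      simp only [Matrix.trace, Matrix.diag, Matrix.mul_apply, Matrix.conjTranspose_apply,
        dotProduct, Fintype.sum_prod_type, hu, Pi.star_apply, mul_comm]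
    rw [h2]
    simpa [Matrix.trace_sub] using h
  -- `c • u` is the polar partner of `v`, scaled so that its norm is at most one.
  have hdist : (star (v - (c : ℂ) • u) ⬝ᵥ (v - (c : ℂ) • u)).re ≤ √(δ * Real.log 2) ^ 2 := by
    have he : (star (v - (c : ℂ) • u) ⬝ᵥ (v - (c : ℂ) • u)).re =
        1 - 2 * (c * (star v ⬝ᵥ u).re) + c * c * (star u ⬝ᵥ u).re := by
      simp only [star_sub, star_smul, sub_dotProduct, dotProduct_sub, smul_dotProduct,
        dotProduct_smul, smul_eq_mul, Complex.star_def, Complex.conj_ofReal, Complex.sub_re,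
        Complex.re_ofReal_mul]
      rw [huv, hvv, Complex.one_re]; ring
    have h1 : c * c * (star u ⬝ᵥ u).re ≤ 1 := by
      rw [hc2]
      exact (mul_le_mul_of_nonneg_left huu (inv_nonneg.mpr hd.le)).trans
        (inv_mul_cancel₀ hd.ne').le
    have h2 : δ * Real.log 2 ≤ √(δ * Real.log 2) ^ 2 := by
      rw [Real.sq_sqrt']; exact le_max_left _ _
    rw [he, hvu]
    linarith
  have hq := re_form_sub_le hM hM1 v ((c : ℂ) • u) _ (Real.sqrt_nonneg _)
    (by rw [hvv, Complex.one_re]) hdist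
  have hqu : (star ((c : ℂ) • u) ⬝ᵥ M *ᵥ ((c : ℂ) • u)).re ≤ M.trace.re / dB := by
    simp only [star_smul, Matrix.mulVec_smul, smul_dotProduct, dotProduct_smul, smul_eq_mul,
      Complex.star_def, Complex.conj_ofReal, Complex.re_ofReal_mul]
    rw [← mul_assoc, hc2, div_eq_inv_mul]
    exact mul_le_mul_of_nonneg_left (re_form_le_trace hMΓ hW) (inv_nonneg.mpr hd.le)
  rw [trace_pureState_mul]
  linarith

/-! ### The bound on the size of the code -/

/-- theorem 4: a PPT-decoded code of N highly entangled pure states with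
error probability ≤ ε satisfies N ≤ (1 − ε − √2·δ^{1/4})⁻¹ · dC. -/
theorem stmt10 (dB dC : ℕ) (hB : 0 < dB) (hBC : dB ≤ dC) (δ ε : ℝ) (hδ : 0 ≤ δ) (hε : 0 ≤ ε)
    (hcond : ε + Real.sqrt 2 * δ ^ ((1 : ℝ) / 4) < 1)
    (N : ℕ) (hN : 0 < N)
    (v : Fin N → Fin dB × Fin dC → ℂ) (hv : ∀ i, IsUnitVec (v i))
    (hE : ∀ i, entg (v i) ≥ Real.logb 2 dB - δ)
    (M : Fin N → Matrix (Fin dB × Fin dC) (Fin dB × Fin dC) ℂ)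
    (hM : ∀ i, (M i).PosSemidef) (hMΓ : ∀ i, (ptranspose (M i)).PosSemidef)
    (hMsum : (1 - ∑ i, M i).PosSemidef)
    (htr : ∀ i, 1 - ε ≤ (Matrix.trace (pureState (v i) * M i)).re) :
    (N : ℝ) ≤ (1 - ε - Real.sqrt 2 * δ ^ ((1 : ℝ) / 4))⁻¹ * dC := by
  have hd : (0 : ℝ) < dB := Nat.cast_pos.mpr hB
  have hM1 : ∀ i, (1 - M i).PosSemidef := fun i => by
    have h : 1 - M i = (1 - ∑ j, M j) + ∑ j ∈ Finset.univ.erase i, M j := by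
      rw [← Finset.add_sum_erase _ _ (Finset.mem_univ i)]; abel
    rw [h]
    exact hMsum.add (Matrix.posSemidef_sum _ fun j _ => hM j)
  have hδε : √2 * δ ^ ((1 : ℝ) / 4) ≤ 1 := by linarith
  have hone : ∀ i, 1 - ε - √2 * δ ^ ((1 : ℝ) / 4) ≤ (M i).trace.re / dB := fun i => by
    have h1 := success_le hB (v i) (hv i) (hE i) (hM i) (hMΓ i) (hM1 i)
    have h2 := two_sqrt_le hδ hδε
    linarith [htr i]
  have hsum := Finset.sum_le_sum fun i (_ : i ∈ Finset.univ) => hone i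
  rw [Finset.sum_const, Finset.card_univ, Fintype.card_fin, nsmul_eq_mul, ← Finset.sum_div] at hsum
  have htot : ∑ i, (M i).trace.re ≤ dB * dC := by
    have h := (Complex.le_def.mp hMsum.trace_nonneg).1
    simpa [Matrix.trace_sub, Matrix.trace_sum] using h
  -- Summing over the messages: `∑ tr M i ≤ tr 1 = dB * dC`, and the factor `dB` cancels.
  have hN' : (N : ℝ) * (1 - ε - √2 * δ ^ ((1 : ℝ) / 4)) ≤ dC := by
    refine hsum.trans ?_
    rw [div_le_iff₀ hd]
    linarith
  rw [← div_eq_inv_mul, le_div_iff₀ (by linarith)]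
  exact hN'
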